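/- Let n, d, k be integers with d ≥ 3 and 24 ≤ k ≤ n. Then E[‖ν_k‖_TC] ≥ (7/48)·d·2^n. -/

import Mathlib

open MeasureTheory Finset

noncomputable section

/-- Points of the grid `[2^n]^d` (coordinates taken 0-based). -/
abbrev GridPt (n d : ℕ) := Fin d → Fin (2^n)

/-- Normalized counting "volume" of a subset of the grid: `Vol(A) = 2^{-nd}|A|`. -/
def Vol (n d : ℕ) (A : Finset (GridPt n d)) : ℝ := (A.card : ℝ) / 2^(n*d)

/-- The ℓ1 metric on the grid. -/
def gdist {n d : ℕ} (u v : GridPt n d) : ℝ := ∑ i, |((u i : ℕ) : ℝ) - ((v i : ℕ) : ℝ)|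

/-- Indices of the dyadic cubes in `D_k`. -/
abbrev CubeIdx (d k : ℕ) := Fin d → Fin (2^k)

/-- The dyadic cube of side-cardinality `2^(n-k)` indexed by `j ∈ {0,…,2^k-1}^d`. -/
def cube (n d k : ℕ) (j : CubeIdx d k) : Finset (GridPt n d) :=
  Finset.univ.filter (fun x => ∀ i, (x i : ℕ) / 2^(n-k) = (j i : ℕ))

/-- `p = 2^{-4d}`. -/
def pp (d : ℕ) : ℝ := ((2:ℝ)^(4*d))⁻¹

/-- The law of each `X_Q`: takes values `±1` with probability `p/2` each
and `0` with probability `1-p`. -/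
def stepMeasure (d : ℕ) : Measure ℝ :=
  (Real.toNNReal (pp d / 2)) • Measure.dirac (1:ℝ)
  + (Real.toNNReal (pp d / 2)) • Measure.dirac (-1:ℝ)
  + (Real.toNNReal (1 - pp d)) • Measure.dirac (0:ℝ)

instance (d : ℕ) : IsFiniteMeasure (stepMeasure d) := by
  unfold stepMeasure; infer_instance

/-- The joint law of the i.i.d. family `{X_Q}_{Q ∈ D_k}`; a sample point
`ω : CubeIdx d k → ℝ` records the values `X_Q = ω Q`. -/
def prodMeasure (d k : ℕ) : Measure (CubeIdx d k → ℝ) :=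
  Measure.pi fun _ => stepMeasure d

/-- `μ_k(A) = ∑_{Q ∈ D_k} p⁻¹ 2^k X_Q Vol(A ∩ Q)`, as a function of the sample point `ω`. -/
def muMeas (n d k : ℕ) (A : Finset (GridPt n d)) (ω : CubeIdx d k → ℝ) : ℝ :=
  ∑ j : CubeIdx d k, (pp d)⁻¹ * 2^k * ω j * Vol n d (A ∩ cube n d k j)

/-- `ν_k(A) = μ_k(A) - μ_k([2^n]^d)·Vol(A)`. -/
def nuMeas (n d k : ℕ) (A : Finset (GridPt n d)) (ω : CubeIdx d k → ℝ) : ℝ :=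
  muMeas n d k A ω - muMeas n d k Finset.univ ω * Vol n d A

/-- The transportation cost norm of a signed measure `μ` on the grid (given by its point
masses), via Kantorovich duality: the supremum of `|∫ f dμ|` over `1`-Lipschitz `f`. -/
def tcNorm (n d : ℕ) (μ : GridPt n d → ℝ) : ℝ :=
  sSup {r : ℝ | ∃ f : GridPt n d → ℝ,
    (∀ u v, |f u - f v| ≤ gdist u v) ∧ r = |∑ x, f x * μ x|}


lemma card_coord (n k : ℕ) (hkn : k ≤ n) (j : Fin (2^k)) :
    (Finset.univ.filter (fun x : Fin (2^n) => (x : ℕ) / 2^(n-k) = (j : ℕ))).card = 2^(n-k) := by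
  have hs : 0 < 2^(n-k) := by positivity
  have hN : 2^n = 2^k * 2^(n-k) := by rw [← pow_add]; congr 1; omega
  rw [← Finset.card_map Fin.valEmbedding]
  have : (Finset.univ.filter (fun x : Fin (2^n) => (x : ℕ) / 2^(n-k) = (j : ℕ))).map
      Fin.valEmbedding = Finset.Ico ((j:ℕ) * 2^(n-k)) (((j:ℕ)+1) * 2^(n-k)) := by
    ext y
    simp only [Finset.mem_map, Finset.mem_filter, Finset.mem_univ, true_and,
      Fin.valEmbedding_apply, Finset.mem_Ico]
    constructor
    · rintro ⟨x, hx, rfl⟩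
      rw [Nat.div_eq_iff hs] at hx
      constructor
      · omega
      · rw [add_mul]; omega
    · rintro ⟨h1, h2⟩
      have h3 : ((j:ℕ)+1) * 2^(n-k) ≤ 2^n := by
        rw [hN]; exact Nat.mul_le_mul_right _ j.2
      refine ⟨⟨y, by omega⟩, ?_, rfl⟩
      rw [Nat.div_eq_iff hs]
      rw [add_mul] at h2
      constructor
      · omega
      · simp only; omega
  rw [this, Nat.card_Ico, add_mul]; omega

lemma card_cube (n d k : ℕ) (hkn : k ≤ n) (j : CubeIdx d k) :
    (cube n d k j).card = 2^((n-k)*d) := by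
  have : cube n d k j = Fintype.piFinset (fun i =>
      Finset.univ.filter (fun x : Fin (2^n) => (x : ℕ) / 2^(n-k) = (j i : ℕ))) := by
    ext x; simp [cube]
  rw [this, Fintype.card_piFinset]
  simp only [card_coord n k hkn]
  simp [pow_mul]

/-- index of the cube containing `x` -/
def cidx (n d k : ℕ) (hkn : k ≤ n) (x : GridPt n d) : CubeIdx d k := fun i =>
  ⟨(x i : ℕ) / 2^(n-k), by
    rw [Nat.div_lt_iff_lt_mul (by positivity), ← pow_add]
    have : k + (n-k) = n := by omega
    rw [this]; exact (x i).2⟩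

lemma mem_cube_iff (n d k : ℕ) (hkn : k ≤ n) (x : GridPt n d) (j : CubeIdx d k) :
    x ∈ cube n d k j ↔ cidx n d k hkn x = j := by
  simp only [cube, Finset.mem_filter, Finset.mem_univ, true_and, cidx, funext_iff, Fin.ext_iff]

lemma sum_cidx (n d k : ℕ) (hkn : k ≤ n) (g : CubeIdx d k → ℝ) :
    ∑ x, g (cidx n d k hkn x) = 2^((n-k)*d) * ∑ j, g j := by
  rw [← Finset.sum_fiberwise (s := Finset.univ) (g := cidx n d k hkn), Finset.mul_sum]
  refine Finset.sum_congr rfl fun j _ => ?_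
  have : Finset.univ.filter (fun x => cidx n d k hkn x = j) = cube n d k j := by
    ext x; simp [mem_cube_iff n d k hkn]
  rw [this, Finset.sum_congr rfl (g := fun _ => g j)]
  · simp [card_cube n d k hkn]
  · intro x hx; rw [(mem_cube_iff n d k hkn x j).1 hx]

lemma mu_singleton (n d k : ℕ) (hkn : k ≤ n) (x : GridPt n d) (ω : CubeIdx d k → ℝ) :
    muMeas n d k {x} ω = (pp d)⁻¹ * 2^k / 2^(n*d) * ω (cidx n d k hkn x) := by
  unfold muMeas
  rw [Finset.sum_eq_single (cidx n d k hkn x)]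
  · have : {x} ∩ cube n d k (cidx n d k hkn x) = {x} := by
      simp [mem_cube_iff n d k hkn]
    rw [this]; simp [Vol]; ring
  · intro j _ hj
    have : {x} ∩ cube n d k j = ∅ := by
      rw [Finset.singleton_inter_of_notMem]
      rw [mem_cube_iff n d k hkn]; exact fun h => hj h.symm
    rw [this]; simp [Vol]
  · simp

lemma mu_univ (n d k : ℕ) (hkn : k ≤ n) (ω : CubeIdx d k → ℝ) :
    muMeas n d k Finset.univ ω = (pp d)⁻¹ * 2^k / 2^(n*d) * 2^((n-k)*d) * ∑ j, ω j := by
  unfold muMeas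
  rw [Finset.mul_sum]
  refine Finset.sum_congr rfl fun j _ => ?_
  rw [Finset.univ_inter, Vol, card_cube n d k hkn]
  push_cast; ring

lemma nu_singleton (n d k : ℕ) (hkn : k ≤ n) (x : GridPt n d) (ω : CubeIdx d k → ℝ) :
    nuMeas n d k {x} ω = (pp d)⁻¹ * 2^k / 2^(n*d) *
      (ω (cidx n d k hkn x) - 2^((n-k)*d) / 2^(n*d) * ∑ j, ω j) := by
  unfold nuMeas
  rw [mu_singleton n d k hkn, mu_univ n d k hkn]
  simp [Vol]; ring

lemma sum_nu (n d k : ℕ) (hkn : k ≤ n) (ω : CubeIdx d k → ℝ) :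
    ∑ x, nuMeas n d k {x} ω = 0 := by
  simp only [nu_singleton n d k hkn]
  rw [← Finset.mul_sum, Finset.sum_sub_distrib, sum_cidx n d k hkn]
  simp [← pow_mul]
  right
  field_simp
  ring

lemma le_tcNorm (n d : ℕ) (μ : GridPt n d → ℝ) (h0 : ∑ x, μ x = 0) (f : GridPt n d → ℝ)
    (hf : ∀ u v, |f u - f v| ≤ gdist u v) : ∑ x, f x * μ x ≤ tcNorm n d μ := by
  refine (le_abs_self _).trans (le_csSup ?_ ⟨f, hf, rfl⟩)
  let x0 : GridPt n d := fun _ => ⟨0, by positivity⟩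
  refine ⟨∑ x, gdist x x0 * |μ x|, ?_⟩
  rintro r ⟨g, hg, rfl⟩
  have : ∑ x, g x * μ x = ∑ x, (g x - g x0) * μ x := by
    simp only [sub_mul]
    rw [Finset.sum_sub_distrib, ← Finset.mul_sum, h0]; simp
  rw [this]
  refine (Finset.abs_sum_le_sum_abs _ _).trans (Finset.sum_le_sum fun x _ => ?_)
  rw [abs_mul]
  exact mul_le_mul_of_nonneg_right (hg _ _) (abs_nonneg _)

/-- number of full coordinates steps between -/
def sep (a j : ℕ) : ℕ := (a - j - 1) + (j - a - 1)

lemma sum_sep (a M : ℕ) : ∑ j ∈ Finset.range M, ((1:ℝ)/8)^(sep a j) ≤ 7/2 := by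
  have geo : ∀ m, ∑ i ∈ Finset.range m, ((1:ℝ)/8)^i ≤ 8/7 := by
    intro m
    rw [geom_sum_eq (by norm_num)]
    have : (0:ℝ) ≤ (1/8)^m := by positivity
    rw [div_le_iff_of_neg (by norm_num)]
    linarith
  have h1 : ∑ j ∈ Finset.range M, ((1:ℝ)/8)^(sep a j) ≤
      ∑ j ∈ Finset.range (a + 1 + M), ((1:ℝ)/8)^(sep a j) := by
    apply Finset.sum_le_sum_of_subset_of_nonneg
    · intro j; simp; omega
    · intros; positivity
  rw [Finset.sum_range_add, Finset.sum_range_succ] at h1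
  have h2 : ∑ j ∈ Finset.range a, ((1:ℝ)/8)^(sep a j) = ∑ i ∈ Finset.range a, ((1:ℝ)/8)^i := by
    rw [← Finset.sum_range_reflect]
    refine Finset.sum_congr rfl fun j hj => ?_
    have := Finset.mem_range.1 hj
    congr 1; unfold sep; omega
  have h3 : ∑ i ∈ Finset.range M, ((1:ℝ)/8)^(sep a (a+1+i)) = ∑ i ∈ Finset.range M, ((1:ℝ)/8)^i := by
    refine Finset.sum_congr rfl fun j hj => ?_
    congr 1; unfold sep; omega
  have h4 : ((1:ℝ)/8)^(sep a a) = 1 := by simp [sep]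
  rw [h2, h3, h4] at h1
  have := geo a
  have := geo M
  linarith

/-- cubes close to the cube `a` -/
def near (d k : ℕ) (a : CubeIdx d k) : Finset (CubeIdx d k) :=
  Finset.univ.filter fun j => 3 * ∑ i, sep (a i) (j i) ≤ d

lemma card_near (d k : ℕ) (a : CubeIdx d k) : ((near d k a).card : ℝ) ≤ 7^d := by
  have h : ∀ j ∈ near d k a, (1:ℝ) ≤ ∏ i, (2 * ((1:ℝ)/8)^(sep (a i) (j i))) := by
    intro j hj
    simp only [near, Finset.mem_filter, Finset.mem_univ, true_and] at hj
    rw [Finset.prod_mul_distrib, Finset.prod_pow_eq_pow_sum]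
    simp only [Finset.prod_const, Finset.card_univ, Fintype.card_fin]
    rw [one_div, inv_pow, ← div_eq_mul_inv, le_div_iff₀ (by positivity), one_mul]
    have : (8:ℝ) = 2^3 := by norm_num
    rw [this, ← pow_mul]
    exact pow_le_pow_right₀ (by norm_num) hj
  calc ((near d k a).card : ℝ) = ∑ j ∈ near d k a, (1:ℝ) := by simp
    _ ≤ ∑ j ∈ near d k a, ∏ i, (2 * ((1:ℝ)/8)^(sep (a i) (j i))) := Finset.sum_le_sum h
    _ ≤ ∑ j : CubeIdx d k, ∏ i, (2 * ((1:ℝ)/8)^(sep (a i) (j i))) := by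
        apply Finset.sum_le_sum_of_subset_of_nonneg (Finset.subset_univ _)
        intros; positivity
    _ = ∏ i, ∑ j : Fin (2^k), (2 * ((1:ℝ)/8)^(sep (a i) j)) := by
        rw [Finset.prod_univ_sum]; simp
    _ ≤ ∏ i : Fin d, (7:ℝ) := by
        apply Finset.prod_le_prod
        · intros; positivity
        · intro i _
          rw [← Finset.mul_sum, Fin.sum_univ_eq_sum_range (fun j => ((1:ℝ)/8)^(sep (a i) j))]
          have := sum_sep (a i) (2^k)
          linarith
    _ = 7^d := by simp

/-- a Lipschitz substitute of the distance of `x` to the cube `j` of side `s` -/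
def gfun {n d k : ℕ} (s : ℝ) (j : CubeIdx d k) (x : GridPt n d) : ℝ :=
  ∑ i, max (max (s * ((j i : ℕ) : ℝ) - ((x i : ℕ) : ℝ)) (((x i : ℕ) : ℝ) - s * (((j i : ℕ) : ℝ) + 1))) 0

lemma gfun_nonneg {n d k : ℕ} (s : ℝ) (j : CubeIdx d k) (x : GridPt n d) : 0 ≤ gfun s j x :=
  Finset.sum_nonneg fun _ _ => le_max_right _ _

lemma gfun_lip {n d k : ℕ} (s : ℝ) (j : CubeIdx d k) (u v : GridPt n d) :
    gfun s j u ≤ gfun s j v + gdist u v := by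
  unfold gfun gdist
  rw [← Finset.sum_add_distrib]
  refine Finset.sum_le_sum fun i _ => ?_
  have h1 := le_abs_self (((u i : ℕ) : ℝ) - ((v i : ℕ) : ℝ))
  have h2 := neg_abs_le (((u i : ℕ) : ℝ) - ((v i : ℕ) : ℝ))
  have h3 := abs_nonneg (((u i : ℕ) : ℝ) - ((v i : ℕ) : ℝ))
  set a := s * ((j i : ℕ) : ℝ) - ((v i : ℕ) : ℝ)
  set b := ((v i : ℕ) : ℝ) - s * (((j i : ℕ) : ℝ) + 1)
  have h4 := le_max_left (max a b) 0
  have h5 := le_max_right (max a b) 0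
  have h6 := le_max_left a b
  have h7 := le_max_right a b
  refine max_le (max_le ?_ ?_) ?_ <;> linarith

lemma gfun_zero (n d k : ℕ) (hkn : k ≤ n) (x : GridPt n d) :
    gfun ((2:ℝ)^(n-k)) (cidx n d k hkn x) x = 0 := by
  unfold gfun
  refine Finset.sum_eq_zero fun i _ => ?_
  have h1 : 2^(n-k) * ((x i : ℕ) / 2^(n-k)) ≤ (x i : ℕ) := Nat.mul_div_le _ _
  have h2 : (x i : ℕ) < 2^(n-k) * ((x i : ℕ) / 2^(n-k) + 1) :=
    Nat.lt_mul_div_succ _ (by positivity)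
  have h1' : (2:ℝ)^(n-k) * (((x i : ℕ) / 2^(n-k) : ℕ) : ℝ) ≤ ((x i : ℕ) : ℝ) := by exact_mod_cast h1
  have h2' : ((x i : ℕ) : ℝ) < (2:ℝ)^(n-k) * ((((x i : ℕ) / 2^(n-k) : ℕ) : ℝ) + 1) := by
    exact_mod_cast h2
  apply max_eq_right
  simp only [cidx]
  exact max_le (by linarith) (by linarith)

lemma gfun_far (n d k : ℕ) (hkn : k ≤ n) (x : GridPt n d) (j : CubeIdx d k)
    (hj : j ∉ near d k (cidx n d k hkn x)) :
    (d:ℝ) / 3 * 2^(n-k) ≤ gfun ((2:ℝ)^(n-k)) j x := by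
  have hs : (0:ℝ) < 2^(n-k) := by positivity
  simp only [near, Finset.mem_filter, Finset.mem_univ, true_and, not_le] at hj
  have h0 : (d:ℝ) / 3 ≤ ((∑ i, sep (cidx n d k hkn x i) (j i) : ℕ) : ℝ) := by
    have : (d:ℝ) ≤ 3 * ((∑ i, sep (cidx n d k hkn x i) (j i) : ℕ) : ℝ) := by exact_mod_cast hj.le
    linarith
  refine (mul_le_mul_of_nonneg_right h0 hs.le).trans ?_
  unfold gfun
  push_cast
  rw [Finset.sum_mul]
  refine Finset.sum_le_sum fun i _ => ?_
  have h1 : 2^(n-k) * ((x i : ℕ) / 2^(n-k)) ≤ (x i : ℕ) := Nat.mul_div_le _ _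
  have h2 : (x i : ℕ) < 2^(n-k) * ((x i : ℕ) / 2^(n-k) + 1) :=
    Nat.lt_mul_div_succ _ (by positivity)
  have h1' : (2:ℝ)^(n-k) * (((x i : ℕ) / 2^(n-k) : ℕ) : ℝ) ≤ ((x i : ℕ) : ℝ) := by exact_mod_cast h1
  have h2' : ((x i : ℕ) : ℝ) < (2:ℝ)^(n-k) * ((((x i : ℕ) / 2^(n-k) : ℕ) : ℝ) + 1) := by
    exact_mod_cast h2
  simp only [cidx]
  generalize (x i : ℕ) / 2^(n-k) = a at *
  set y := ((x i : ℕ) : ℝ)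
  generalize ((j i : ℕ)) = b at *
  have key : (sep a b = 0) ∨ ((sep a b : ℝ) = (a:ℝ) - b - 1) ∨ ((sep a b : ℝ) = (b:ℝ) - a - 1) := by
    rcases lt_trichotomy a b with h | h | h
    · right; right
      have : sep a b + a + 1 = b := by unfold sep; omega
      have h9 := congrArg (Nat.cast (R := ℝ)) this
      push_cast at h9; linarith
    · left; unfold sep; omega
    · right; left
      have : sep a b + b + 1 = a := by unfold sep; omega
      have h9 := congrArg (Nat.cast (R := ℝ)) this
      push_cast at h9; linarith
  rcases key with h | h | h
  · rw [h]; simp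
  · rw [h]
    refine le_trans ?_ ((le_max_right _ _).trans (le_max_left _ _))
    nlinarith
  · rw [h]
    refine le_trans ?_ ((le_max_left _ _).trans (le_max_left _ _))
    nlinarith

instance (d k : ℕ) : Nonempty (CubeIdx d k) := ⟨fun _ => ⟨0, by positivity⟩⟩

/-- the test function -/
def hfun {n d k : ℕ} (R s : ℝ) (ω : CubeIdx d k → ℝ) (x : GridPt n d) (j : CubeIdx d k) : ℝ :=
  if ω j = -1 then min R (gfun s j x) else R

def ffun {n d k : ℕ} (R s : ℝ) (ω : CubeIdx d k → ℝ) (x : GridPt n d) : ℝ :=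
  Finset.univ.inf' Finset.univ_nonempty (hfun R s ω x)

lemma gdist_nonneg {n d : ℕ} (u v : GridPt n d) : 0 ≤ gdist u v :=
  Finset.sum_nonneg fun _ _ => abs_nonneg _

lemma gdist_comm {n d : ℕ} (u v : GridPt n d) : gdist u v = gdist v u := by
  unfold gdist; simp only [abs_sub_comm]

lemma ffun_lip {n d k : ℕ} (R s : ℝ) (ω : CubeIdx d k → ℝ) (u v : GridPt n d) :
    |ffun R s ω u - ffun R s ω v| ≤ gdist u v := by
  have key : ∀ u v : GridPt n d, ffun R s ω u ≤ ffun R s ω v + gdist u v := by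
    intro u v
    rw [← sub_le_iff_le_add]
    refine Finset.le_inf' _ _ fun j _ => ?_
    have h1 : ffun R s ω u ≤ hfun R s ω u j := Finset.inf'_le _ (Finset.mem_univ j)
    have h2 : hfun R s ω u j ≤ hfun R s ω v j + gdist u v := by
      have := gdist_nonneg u v
      unfold hfun
      split_ifs
      · rw [← min_add_add_right]
        exact min_le_min (by linarith) (gfun_lip s j u v)
      · linarith
    linarith
  rw [abs_le]
  have h1 := key u v
  have h2 := key v u
  rw [gdist_comm] at h2
  constructor <;> linarith

lemma ffun_le {n d k : ℕ} (R s : ℝ) (ω : CubeIdx d k → ℝ) (x : GridPt n d) :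
    ffun R s ω x ≤ R := by
  refine (Finset.inf'_le _ (Finset.mem_univ (Classical.arbitrary _))).trans ?_
  unfold hfun; split_ifs
  · exact min_le_left _ _
  · exact le_rfl

lemma ffun_nonneg {n d k : ℕ} (R s : ℝ) (hR : 0 ≤ R) (ω : CubeIdx d k → ℝ) (x : GridPt n d) :
    0 ≤ ffun R s ω x := by
  refine Finset.le_inf' _ _ fun j _ => ?_
  unfold hfun; split_ifs
  · exact le_min hR (gfun_nonneg _ _ _)
  · exact hR

/-- indicators -/
def ip (t : ℝ) : ℝ := if t = 1 then 1 else 0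
def im (t : ℝ) : ℝ := if t = -1 then 1 else 0

lemma im_nonneg (t : ℝ) : 0 ≤ im t := by unfold im; split_ifs <;> norm_num

lemma ffun_key (n d k : ℕ) (hkn : k ≤ n) (ω : CubeIdx d k → ℝ)
    (hω : ∀ j, ω j = 1 ∨ ω j = -1 ∨ ω j = 0) (x : GridPt n d) :
    (d:ℝ)/3 * 2^(n-k) * (ip (ω (cidx n d k hkn x)) -
      ∑ j ∈ (near d k (cidx n d k hkn x)).erase (cidx n d k hkn x),
        ip (ω (cidx n d k hkn x)) * im (ω j))
    ≤ ffun ((d:ℝ)/3 * 2^(n-k)) (2^(n-k)) ω x * ω (cidx n d k hkn x) := by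
  set R := (d:ℝ)/3 * 2^(n-k) with hRdef
  have hR : 0 ≤ R := by positivity
  set a := cidx n d k hkn x with ha
  rcases hω a with h | h | h
  · rw [h]
    have h1 : ip 1 = 1 := by simp [ip]
    simp only [h1, one_mul, mul_one]
    by_cases hex : ∃ j ∈ (near d k a).erase a, ω j = -1
    · obtain ⟨j, hj, hjω⟩ := hex
      have : (1:ℝ) ≤ ∑ j ∈ (near d k a).erase a, im (ω j) := by
        have h2 := Finset.single_le_sum (f := fun j => im (ω j)) (fun i _ => im_nonneg _) hj
        simp only [hjω] at h2
        simpa [im] using h2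
      refine le_trans ?_ (ffun_nonneg R _ hR ω x)
      exact mul_nonpos_of_nonneg_of_nonpos hR (by linarith)
    · push Not at hex
      have h3 : R ≤ ffun R (2^(n-k)) ω x := by
        refine Finset.le_inf' _ _ fun j _ => ?_
        unfold hfun; split_ifs with hj
        · refine le_min le_rfl ?_
          apply gfun_far n d k hkn
          intro hn
          refine hex j (Finset.mem_erase.2 ⟨?_, hn⟩) hj
          rintro rfl
          rw [h] at hj; norm_num at hj
        · exact le_rfl
      refine le_trans ?_ h3
      have h4 : 0 ≤ ∑ j ∈ (near d k a).erase a, im (ω j) := Finset.sum_nonneg fun _ _ => im_nonneg _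
      nlinarith
  · have h5 : ffun R (2^(n-k)) ω x ≤ 0 := by
      refine (Finset.inf'_le _ (Finset.mem_univ a)).trans ?_
      unfold hfun
      rw [if_pos h, ha, gfun_zero]
      exact min_le_right _ _
    have : ip (-1) = 0 := by unfold ip; norm_num
    rw [h]; simp only [this]; simp; exact h5
  · have : ip 0 = 0 := by unfold ip; norm_num
    rw [h]; simp [this]

lemma tc_lower (n d k : ℕ) (hkn : k ≤ n) (ω : CubeIdx d k → ℝ)
    (hω : ∀ j, ω j = 1 ∨ ω j = -1 ∨ ω j = 0) (ε : ℝ) (hε : 0 < ε) :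
    (pp d)⁻¹ * 2^k / 2^(n*d) * 2^((n-k)*d) * ((d:ℝ)/3 * 2^(n-k)) *
      (∑ a, (ip (ω a) - ∑ j ∈ (near d k a).erase a, ip (ω a) * im (ω j))
        - ε - (∑ a, ∑ b, ω a * ω b) / (4 * ε))
    ≤ tcNorm n d (fun x => nuMeas n d k {x} ω) := by
  refine le_trans ?_ (le_tcNorm n d _ (sum_nu n d k hkn ω)
    (ffun ((d:ℝ)/3 * 2^(n-k)) (2^(n-k)) ω) (ffun_lip _ _ _))
  set R := (d:ℝ)/3 * 2^(n-k) with hRdef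
  have hR : 0 ≤ R := by positivity
  have hp : 0 < pp d := by unfold pp; positivity
  set A := (pp d)⁻¹ * 2^k / 2^(n*d) with hA
  have hA0 : 0 ≤ A := by positivity
  simp only [nu_singleton n d k hkn]
  rw [← hA]
  set F := ffun (n := n) R (2^(n-k)) ω with hF
  obtain ⟨S, hS⟩ : ∃ S, S = ∑ j, ω j := ⟨_, rfl⟩
  have hSS : ∑ a, ∑ b, ω a * ω b = S * S := by rw [hS, Finset.sum_mul_sum]
  rw [hSS, ← hS]
  have e1 : ∑ x, F x * (A * (ω (cidx n d k hkn x) - 2^((n-k)*d) / 2^(n*d) * S)) =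
      A * (∑ x, F x * ω (cidx n d k hkn x) - 2^((n-k)*d) / 2^(n*d) * S * ∑ x, F x) := by
    rw [Finset.mul_sum Finset.univ F, ← Finset.sum_sub_distrib, Finset.mul_sum]
    refine Finset.sum_congr rfl fun x _ => ?_
    ring
  rw [e1]
  have e2 : R * (2^((n-k)*d) * ∑ a, (ip (ω a) - ∑ j ∈ (near d k a).erase a, ip (ω a) * im (ω j)))
      ≤ ∑ x, F x * ω (cidx n d k hkn x) := by
    rw [← sum_cidx n d k hkn, Finset.mul_sum]
    exact Finset.sum_le_sum fun x _ => ffun_key n d k hkn ω hω x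
  have e3 : ∑ x, F x ≤ 2^(n*d) * R := by
    refine (Finset.sum_le_card_nsmul _ _ R fun x _ => ffun_le _ _ _ _).trans ?_
    simp [← pow_mul]
  have e4 : 0 ≤ ∑ x, F x := Finset.sum_nonneg fun x _ => ffun_nonneg _ _ hR _ _
  have e5 : |S| ≤ ε + S * S / (4 * ε) := by
    have : S * S = |S| * |S| := (abs_mul_abs_self S).symm
    rw [this, ← sub_nonneg]
    have : ε + |S| * |S| / (4*ε) - |S| = (2 * ε - |S|)^2 / (4 * ε) := by field_simp; ring
    rw [this]; positivity
  have e6 : S * ∑ x, F x ≤ (ε + S * S / (4 * ε)) * (2^(n*d) * R) :=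
    (mul_le_mul_of_nonneg_right (le_abs_self S) e4).trans
      (mul_le_mul e5 e3 e4 (le_trans (abs_nonneg _) e5))
  have e7 : 2^((n-k)*d) / 2^(n*d) * S * ∑ x, F x ≤ 2^((n-k)*d) * (ε + S * S / (4 * ε)) * R := by
    calc (2:ℝ)^((n-k)*d) / 2^(n*d) * S * ∑ x, F x = 2^((n-k)*d) / 2^(n*d) * (S * ∑ x, F x) := by ring
      _ ≤ 2^((n-k)*d) / 2^(n*d) * ((ε + S * S / (4 * ε)) * (2^(n*d) * R)) :=
        mul_le_mul_of_nonneg_left e6 (by positivity)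
      _ = _ := by field_simp
  refine le_trans (le_of_eq ?_) (mul_le_mul_of_nonneg_left (sub_le_sub e2 e7) hA0)
  ring

lemma pp_pos (d : ℕ) : 0 < pp d := by unfold pp; positivity
lemma pp_le (d : ℕ) : pp d ≤ 1 := by
  unfold pp; exact inv_le_one_of_one_le₀ (one_le_pow₀ (by norm_num))

lemma integral_step (d : ℕ) (u : ℝ → ℝ) :
    ∫ t, u t ∂(stepMeasure d) = pp d / 2 * u 1 + pp d / 2 * u (-1) + (1 - pp d) * u 0 := by
  have h := pp_pos d
  have h' := pp_le d
  have hi : ∀ (c : NNReal) (a : ℝ), Integrable u (c • Measure.dirac a) := fun c a =>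
    (integrable_dirac (by simp)).smul_measure_nnreal
  unfold stepMeasure
  rw [integral_add_measure ((hi _ _).add_measure (hi _ _)) (hi _ _),
    integral_add_measure (hi _ _) (hi _ _)]
  simp only [integral_smul_nnreal_measure, integral_dirac, NNReal.smul_def, smul_eq_mul]
  rw [Real.coe_toNNReal _ (by linarith), Real.coe_toNNReal _ (by linarith)]

instance step_prob (d : ℕ) : IsProbabilityMeasure (stepMeasure d) := by
  have h := integral_step d (fun _ => 1)
  rw [integral_const] at h
  simp only [smul_eq_mul, mul_one] at h
  have h2 : (stepMeasure d).real Set.univ = 1 := by rw [h]; ring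
  exact ⟨by
    have := (ENNReal.toReal_eq_one_iff _).1 h2
    exact this⟩

instance (d k : ℕ) : IsProbabilityMeasure (prodMeasure d k) := by
  unfold prodMeasure; infer_instance

lemma ae_step (d : ℕ) : ∀ᵐ t ∂(stepMeasure d), t = 1 ∨ t = -1 ∨ t = 0 := by
  unfold stepMeasure
  have : ∀ (c : NNReal) (a : ℝ), (a = 1 ∨ a = -1 ∨ a = 0) →
      ∀ᵐ t ∂(c • Measure.dirac a), t = 1 ∨ t = -1 ∨ t = 0 := by
    intro c a ha
    apply Measure.ae_smul_measure
    rw [ae_dirac_eq]; exact ha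
  rw [ae_add_measure_iff, ae_add_measure_iff]
  exact ⟨⟨this _ _ (by simp), this _ _ (by simp)⟩, this _ _ (by simp)⟩

lemma ae_prod (d k : ℕ) : ∀ᵐ ω ∂(prodMeasure d k), ∀ j, ω j = 1 ∨ ω j = -1 ∨ ω j = 0 := by
  unfold prodMeasure
  rw [ae_all_iff]
  intro j
  exact (Measure.tendsto_eval_ae_ae (μ := fun _ : CubeIdx d k => stepMeasure d)
    (i := j)).eventually (ae_step d)

lemma integrable_all (d k : ℕ) (F : (CubeIdx d k → ℝ) → ℝ) : Integrable F (prodMeasure d k) := by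
  have hfin : (Set.univ.pi (fun _ : CubeIdx d k => ({1, -1, 0} : Set ℝ))).Finite :=
    Set.Finite.pi fun _ => by simp
  have hi : IntegrableOn F (Set.univ.pi (fun _ : CubeIdx d k => ({1, -1, 0} : Set ℝ)))
    (prodMeasure d k) := IntegrableOn.of_finite hfin
  rw [IntegrableOn, Measure.restrict_eq_self_of_ae_mem] at hi
  · exact hi
  · filter_upwards [ae_prod d k] with ω hω
    simpa using hω

lemma integral_coord_one (d k : ℕ) (j : CubeIdx d k) (u : ℝ → ℝ) :
    ∫ ω, u (ω j) ∂(prodMeasure d k) = ∫ t, u t ∂(stepMeasure d) := by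
  have h := integral_fintype_prod_eq_prod (𝕜 := ℝ) (ι := CubeIdx d k) (E := fun _ => ℝ)
    (fun i t => if i = j then u t else 1) (μ := fun _ => stepMeasure d)
  have e1 : ∀ ω : CubeIdx d k → ℝ, ∏ i, (if i = j then u (ω i) else 1) = u (ω j) := by
    intro ω; simp
  simp only [e1] at h
  unfold prodMeasure
  rw [h, Finset.prod_eq_single j]
  · simp
  · intro b _ hb; simp [hb]
  · simp

lemma integral_coord_two (d k : ℕ) (i j : CubeIdx d k) (hij : i ≠ j) (u v : ℝ → ℝ) :
    ∫ ω, u (ω i) * v (ω j) ∂(prodMeasure d k) =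
      (∫ t, u t ∂(stepMeasure d)) * ∫ t, v t ∂(stepMeasure d) := by
  have h := integral_fintype_prod_eq_prod (𝕜 := ℝ) (ι := CubeIdx d k) (E := fun _ => ℝ)
    (fun l t => if l = i then u t else if l = j then v t else 1) (μ := fun _ => stepMeasure d)
  have e1 : ∀ ω : CubeIdx d k → ℝ,
      ∏ l, (if l = i then u (ω l) else if l = j then v (ω l) else 1) = u (ω i) * v (ω j) := by
    intro ω
    rw [Fintype.prod_eq_mul i j hij]
    · simp [hij.symm]
    · rintro l ⟨h1, h2⟩; simp [h1, h2]
  simp only [e1] at h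
  unfold prodMeasure
  rw [h, Fintype.prod_eq_mul i j hij]
  · simp [hij.symm]
  · rintro l ⟨h1, h2⟩; simp [h1, h2]

lemma E_ip (d k : ℕ) (a : CubeIdx d k) : ∫ ω, ip (ω a) ∂(prodMeasure d k) = pp d / 2 := by
  rw [integral_coord_one, integral_step]
  unfold ip; norm_num

lemma E_ipim (d k : ℕ) (a j : CubeIdx d k) (h : a ≠ j) :
    ∫ ω, ip (ω a) * im (ω j) ∂(prodMeasure d k) = pp d / 2 * (pp d / 2) := by
  rw [integral_coord_two d k a j h, integral_step, integral_step]
  unfold ip im; norm_num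

lemma E_S (d k : ℕ) :
    ∫ ω, (∑ a : CubeIdx d k, ∑ b : CubeIdx d k, ω a * ω b) ∂(prodMeasure d k)
      = 2^(k*d) * pp d := by
  rw [integral_finsetSum _ fun _ _ => integrable_all _ _ _]
  have : ∀ a : CubeIdx d k, ∫ ω, (∑ b : CubeIdx d k, ω a * ω b) ∂(prodMeasure d k) = pp d := by
    intro a
    rw [integral_finsetSum _ fun _ _ => integrable_all _ _ _, Finset.sum_eq_single a]
    · rw [integral_coord_one d k a (fun t => t * t), integral_step]; ring
    · intro b _ hb
      rw [integral_coord_two d k a b hb.symm (fun t => t) (fun t => t), integral_step]; ring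
    · simp
  simp only [this]
  simp [← pow_mul]

lemma E_main (d k : ℕ) (hd : 3 ≤ d) :
    2^(k*d) * (pp d / 2 * (15/16)) ≤
    ∫ ω, (∑ a : CubeIdx d k, (ip (ω a) - ∑ j ∈ (near d k a).erase a, ip (ω a) * im (ω j)))
      ∂(prodMeasure d k) := by
  rw [integral_finsetSum _ fun _ _ => integrable_all _ _ _]
  have hp := pp_pos d
  have : ∀ a : CubeIdx d k, pp d / 2 * (15/16) ≤
    ∫ ω, (ip (ω a) - ∑ j ∈ (near d k a).erase a, ip (ω a) * im (ω j)) ∂(prodMeasure d k) := by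
    intro a
    rw [integral_sub (integrable_all _ _ _) (integrable_all _ _ _), E_ip,
      integral_finsetSum _ fun _ _ => integrable_all _ _ _]
    rw [Finset.sum_congr rfl (g := fun _ => pp d / 2 * (pp d / 2))
      (fun j hj => E_ipim d k a j (Finset.ne_of_mem_erase hj).symm)]
    rw [Finset.sum_const, nsmul_eq_mul]
    have h1 : (((near d k a).erase a).card : ℝ) ≤ 7^d := by
      refine le_trans ?_ (card_near d k a)
      exact_mod_cast Finset.card_erase_le
    have h2 : (7:ℝ)^d * (pp d / 2) ≤ 1/16 := by
      have : (7:ℝ)^d * pp d = (7/16)^d := by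
        unfold pp; rw [pow_mul, div_pow]; norm_num; rfl
      have h3 : ((7:ℝ)/16)^d ≤ (7/16)^3 := pow_le_pow_of_le_one (by norm_num) (by norm_num) hd
      rw [← mul_div_assoc, this]
      norm_num at h3 ⊢
      linarith
    have h4 : (((near d k a).erase a).card : ℝ) * (pp d / 2) ≤ 1/16 :=
      (mul_le_mul_of_nonneg_right h1 (by positivity)).trans h2
    nlinarith
  have h := Finset.sum_le_sum fun a (_ : a ∈ (Finset.univ : Finset (CubeIdx d k))) => this a
  refine le_trans (le_of_eq ?_) h
  simp [← pow_mul]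

/-- `E[‖ν_k‖_TC] ≥ (7/48)·d·2^n` for `24 ≤ k ≤ n`. Here `ν_k` is viewed as the signed
measure on the grid with point masses `x ↦ ν_k({x})`. -/
theorem expected_tc_norm_ge (n d k : ℕ) (hd : 3 ≤ d) (hk : 24 ≤ k) (hkn : k ≤ n) :
    ∫ ω, tcNorm n d (fun x => nuMeas n d k {x} ω) ∂(prodMeasure d k)
      ≥ (7/48) * (d:ℝ) * 2^n := by
  have hp := pp_pos d
  have hp' : pp d = ((2:ℝ)^(4*d))⁻¹ := rfl
  obtain ⟨E, hE⟩ : ∃ E : ℝ, E = 2^(k*d) * pp d := ⟨_, rfl⟩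
  have hE1 : 1024 ≤ E := by
    have h1 : k * d = (k-4)*d + 4*d := by rw [← add_mul]; congr 1; omega
    have h2 : 10 ≤ (k-4)*d := by
      calc 10 ≤ 20 * 3 := by norm_num
        _ ≤ (k-4)*d := Nat.mul_le_mul (by omega) hd
    rw [hE, hp', h1, pow_add, mul_assoc, mul_inv_cancel₀ (by positivity), mul_one]
    calc (1024:ℝ) = 2^10 := by norm_num
      _ ≤ _ := pow_le_pow_right₀ (by norm_num) h2
  have hEpos : 0 < E := by linarith
  obtain ⟨C, hC⟩ : ∃ C : ℝ, C = (pp d)⁻¹ * 2^k / 2^(n*d) * 2^((n-k)*d) * ((d:ℝ)/3 * 2^(n-k)) :=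
    ⟨_, rfl⟩
  have hC0 : 0 ≤ C := by rw [hC]; positivity
  have hCE : C * E = (d:ℝ)/3 * 2^n := by
    have h1 : (2:ℝ)^(n*d) = 2^(k*d) * 2^((n-k)*d) := by
      rw [← pow_add, ← add_mul]; congr 2; omega
    have h2 : (2:ℝ)^n = 2^k * 2^(n-k) := by rw [← pow_add]; congr 1; omega
    rw [hC, hE, h1, h2]
    field_simp
  have hmono : ∫ ω, C * (∑ a, (ip (ω a) - ∑ j ∈ (near d k a).erase a, ip (ω a) * im (ω j))
        - (E/64) - (∑ a, ∑ b, ω a * ω b) / (4 * (E/64))) ∂(prodMeasure d k) ≤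
      ∫ ω, tcNorm n d (fun x => nuMeas n d k {x} ω) ∂(prodMeasure d k) := by
    refine integral_mono_ae (integrable_all _ _ _) (integrable_all _ _ _) ?_
    filter_upwards [ae_prod d k] with ω hω
    rw [hC]
    exact tc_lower n d k hkn ω hω (E/64) (by positivity)
  refine le_trans ?_ hmono
  rw [integral_const_mul, integral_sub (integrable_all _ _ _) (integrable_all _ _ _),
    integral_sub (integrable_all _ _ _) (integrable_all _ _ _), integral_div, integral_div, E_S, ← hE]
  have hm := E_main d k hd
  have hm2 : (2:ℝ)^(k*d) * (pp d / 2 * (15/16)) = E * (15/32) := by rw [hE]; ring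
  rw [hm2] at hm
  have h5 : E / (4 * (E/64)) = 16 := by field_simp; norm_num
  rw [h5]
  simp only [integral_const, probReal_univ, smul_eq_mul, one_mul]
  calc (7/48) * (d:ℝ) * 2^n = C * (E * (7/16)) := by
        rw [← mul_assoc, hCE]; ring
    _ ≤ _ := mul_le_mul_of_nonneg_left (by linarith) hC0
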